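/- Let K be an algebraically closed field (of arbitrary characteristic), let G = SL₂(K), and let V be a nonzero G-module such that: V is G-irreducible (its only G-invariant subgroups are 0 and V); U does not act trivially on V; [u', v'] ∈ C_V(U) for all u' ∈ U and v' ∈ V; and C_V(T) = 0. Then there exists a K-vector space structure on V, whose underlying additive group is the given one, for which the action of every element of G on V is K-linear, together with a K-linear, G-equivariant isomorphism from V onto K² equipped with the natural action of SL₂(K) by matrix multiplication. -/

import Mathlib

/-- The unipotent element `u_λ = [[1, λ], [0, 1]]` of `SL₂(K)`. -/
def uu (K : Type*) [Field K] (l : K) : Matrix.SpecialLinearGroup (Fin 2) K :=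
  ⟨!![1, l; 0, 1], by simp [Matrix.det_fin_two_of]⟩

/-- The torus element `t_λ = [[λ, 0], [0, λ⁻¹]]` of `SL₂(K)`, for `λ ∈ Kˣ`. -/
def tt (K : Type*) [Field K] (l : Kˣ) : Matrix.SpecialLinearGroup (Fin 2) K :=
  ⟨!![(l : K), 0; 0, ((l⁻¹ : Kˣ) : K)], by simp [Matrix.det_fin_two_of]⟩

/-!
Write `[g, v] = g v - v`. Let `a ∈ C_V(U)` and `b = [u_λ, w⁻¹a]`. Applying the relation
`u_{λ⁻¹} · (w u_λ w⁻¹) · u_{λ⁻¹} = t_{λ⁻¹} w` to `a` shows that `t_{λ⁻¹} w a - w b` and its image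
`t_λ a - b` under `w⁻¹` both lie in `C_V(U)`. As `U` and `w U w⁻¹` generate `G` and `C_V(G) = 0`,
this gives `[u_λ, w⁻¹a] = t_λ a`. The left-hand side is additive in `λ` and the right-hand side
multiplicative, so `λ • a = [u_λ, w⁻¹a]` makes `C_V(U)` a `K`-vector space. For every `a ∈ C_V(U)`
the map `(x, y) ↦ x • a + w⁻¹(y • a)` from `K²` to `V` is then `G`-equivariant, injective when
`a ≠ 0`, and surjective when `V` is irreducible.
-/

open scoped MatrixGroups

section SpecialLinearGroup

/-- The Weyl element `w = [[0, 1], [-1, 0]]` of `SL₂(K)`, which conjugates `U` into the opposite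
unipotent subgroup. -/
def weyl (K : Type*) [Field K] : SL(2, K) :=
  ⟨!![0, 1; -1, 0], by simp [Matrix.det_fin_two_of]⟩

variable {K : Type*} [Field K]

lemma coe_uu (l : K) : (uu K l : Matrix (Fin 2) (Fin 2) K) = !![1, l; 0, 1] := rfl

lemma coe_tt (l : Kˣ) :
    (tt K l : Matrix (Fin 2) (Fin 2) K) = !![(l : K), 0; 0, ((l⁻¹ : Kˣ) : K)] := rfl

lemma coe_weyl : (weyl K : Matrix (Fin 2) (Fin 2) K) = !![0, 1; -1, 0] := rfl

lemma uu_zero : uu K 0 = 1 :=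
  Subtype.ext (by simp [coe_uu, Matrix.one_fin_two])

lemma uu_add (l m : K) : uu K (l + m) = uu K l * uu K m :=
  Subtype.ext (by simp [coe_uu, add_comm])

lemma tt_one : tt K 1 = 1 :=
  Subtype.ext (by simp [coe_tt, Matrix.one_fin_two])

lemma tt_mul (l m : Kˣ) : tt K (l * m) = tt K l * tt K m :=
  Subtype.ext (by simp [coe_tt, mul_comm])

lemma uu_mul_tt (l : K) (m : Kˣ) : uu K l * tt K m = tt K m * uu K (l / (m : K) ^ 2) :=
  Subtype.ext (by simp [coe_uu, coe_tt, field])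

lemma weyl_inv : (weyl K)⁻¹ = weyl K * weyl K * weyl K :=
  Subtype.ext (by simp [coe_weyl, Matrix.adjugate_fin_two_of])

lemma weyl_eq_inv_mul_tt : weyl K = (weyl K)⁻¹ * tt K (-1) :=
  Subtype.ext (by simp [coe_weyl, coe_tt, Matrix.adjugate_fin_two_of])

lemma weyl_inv_mul_tt_mul_weyl (l : Kˣ) : (weyl K)⁻¹ * (tt K l * weyl K) = tt K l⁻¹ :=
  Subtype.ext (by simp [coe_weyl, coe_tt, Matrix.adjugate_fin_two_of])

lemma uu_mul_weyl_conj_uu_mul_uu (l : Kˣ) :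
    uu K ↑l⁻¹ * (weyl K * uu K l * (weyl K)⁻¹) * uu K ↑l⁻¹ = tt K l⁻¹ * weyl K :=
  Subtype.ext (by simp [coe_weyl, coe_uu, coe_tt, Matrix.adjugate_fin_two_of])

lemma weyl_eq_uu_mul_weyl_conj_uu_mul_uu :
    weyl K = uu K 1 * (weyl K * uu K 1 * (weyl K)⁻¹) * uu K 1 := by
  simpa [tt_one] using (uu_mul_weyl_conj_uu_mul_uu (K := K) 1).symm

lemma transvection_zero_one (c : K) :
    Matrix.SpecialLinearGroup.transvection (zero_ne_one (α := Fin 2)) c = uu K c := by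
  ext i j
  fin_cases i <;> fin_cases j <;> simp [Matrix.SpecialLinearGroup.transvection_coe, coe_uu]

lemma transvection_one_zero (c : K) :
    Matrix.SpecialLinearGroup.transvection (one_ne_zero (α := Fin 2)) c =
      weyl K * uu K (-c) * (weyl K)⁻¹ := by
  ext i j
  fin_cases i <;> fin_cases j <;>
    simp [Matrix.SpecialLinearGroup.transvection_coe, coe_uu, coe_weyl, Matrix.adjugate_fin_two_of]

lemma uu_smul_vec (l : K) (p : Fin 2 → K) : uu K l • p = ![p 0 + l * p 1, p 1] := by
  ext i
  fin_cases i <;>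
    simp [Matrix.SpecialLinearGroup.smul_def, coe_uu, Matrix.vecHead, Matrix.vecTail]

lemma weyl_smul_vec (p : Fin 2 → K) : weyl K • p = ![p 1, -p 0] := by
  ext i
  fin_cases i <;>
    simp [Matrix.SpecialLinearGroup.smul_def, coe_weyl, Matrix.vecHead, Matrix.vecTail]

theorem uu_weyl_induction {p : SL(2, K) → Prop} (uu : ∀ l, p (uu K l)) (weyl : p (weyl K))
    (mul : ∀ g h, p g → p h → p (g * h)) (g : SL(2, K)) : p g := by
  refine Matrix.SL2.transvection_induction p (fun i j hij c ↦ ?_) mul g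
  match i, j with
  | 0, 0 | 1, 1 => exact absurd rfl hij
  | 0, 1 => exact transvection_zero_one c ▸ uu c
  | 1, 0 =>
    rw [transvection_one_zero, weyl_inv]
    exact mul _ _ (mul _ _ weyl (uu _)) (mul _ _ (mul _ _ weyl weyl) weyl)

end SpecialLinearGroup

section UnipotentFixed

variable (K V : Type*) [Field K] [AddCommGroup V] [DistribMulAction SL(2, K) V]

/-- The subgroup `C_V(U)` of vectors fixed by the unipotent subgroup `U` of `SL₂(K)`. -/
def unipotentFixed : AddSubgroup V where
  carrier := {v | ∀ l, uu K l • v = v}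
  zero_mem' l := smul_zero (uu K l)
  add_mem' hv hv' l := by rw [smul_add, hv, hv']
  neg_mem' hv l := by rw [smul_neg, hv]

/-- An `SL₂(K)`-module `V` is quadratic without fixed points if `[U, V] ≤ C_V(U)` and
`C_V(SL₂(K)) = 0`. These are the modules for which `C_V(U)` becomes a `K`-vector space. -/
class IsFixedPointFreeQuadratic : Prop where
  uu_smul_sub_mem (l : K) (v : V) : uu K l • v - v ∈ unipotentFixed K V
  fixedPoints_eq_bot : FixedPoints.addSubgroup SL(2, K) V = ⊥

variable {K V}

lemma tt_smul_mem_unipotentFixed (l : Kˣ) {v : V} (hv : v ∈ unipotentFixed K V) :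
    tt K l • v ∈ unipotentFixed K V := fun m ↦ by
  rw [← mul_smul, uu_mul_tt, mul_smul, hv]

lemma mem_fixedPoints_of_mem_unipotentFixed {v : V} (hv : v ∈ unipotentFixed K V)
    (hwv : (weyl K)⁻¹ • v ∈ unipotentFixed K V) : v ∈ FixedPoints.addSubgroup SL(2, K) V := by
  refine uu_weyl_induction (p := fun g ↦ g • v = v) hv ?_ fun g h hg hh ↦ by rw [mul_smul, hh, hg]
  have hconj : (weyl K * uu K 1 * (weyl K)⁻¹) • v = v := by
    rw [mul_smul, mul_smul, hwv, smul_inv_smul]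
  rw [weyl_eq_uu_mul_weyl_conj_uu_mul_uu, mul_smul, mul_smul, hv, hconj, hv]

end UnipotentFixed

namespace IsFixedPointFreeQuadratic

variable {K V : Type*} [Field K] [AddCommGroup V] [DistribMulAction SL(2, K) V]
  [IsFixedPointFreeQuadratic K V]

lemma eq_zero_of_mem_unipotentFixed {v : V} (hv : v ∈ unipotentFixed K V)
    (hwv : (weyl K)⁻¹ • v ∈ unipotentFixed K V) : v = 0 := by
  simpa only [fixedPoints_eq_bot, AddSubgroup.mem_bot] using
    mem_fixedPoints_of_mem_unipotentFixed hv hwv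

theorem uu_smul_weyl_inv_smul_sub (l : Kˣ) {a : V} (ha : a ∈ unipotentFixed K V) :
    uu K l • (weyl K)⁻¹ • a - (weyl K)⁻¹ • a = tt K l • a := by
  set w := weyl K
  set b := uu K l • w⁻¹ • a - w⁻¹ • a with hb
  have hbU : b ∈ unipotentFixed K V := uu_smul_sub_mem _ _
  have htwa : (tt K l⁻¹ * w) • a = a + uu K ↑l⁻¹ • w • b := by
    rw [← uu_mul_weyl_conj_uu_mul_uu, mul_smul, mul_smul, ha, mul_smul, mul_smul,
      ← sub_add_cancel (uu K l • w⁻¹ • a) (w⁻¹ • a), ← hb, smul_add, smul_add, smul_inv_smul, ha,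
      add_comm]
  have hmem : (tt K l⁻¹ * w) • a - w • b ∈ unipotentFixed K V := by
    rw [htwa, add_sub_assoc]
    exact add_mem ha (uu_smul_sub_mem _ _)
  have hinv : w⁻¹ • ((tt K l⁻¹ * w) • a - w • b) = tt K l • a - b := by
    rw [smul_sub, inv_smul_smul, ← mul_smul, weyl_inv_mul_tt_mul_weyl, inv_inv]
  have hzero : (tt K l⁻¹ * w) • a - w • b = 0 := by
    refine eq_zero_of_mem_unipotentFixed hmem ?_
    rw [hinv]
    exact sub_mem (tt_smul_mem_unipotentFixed l ha) hbU
  rw [hzero, smul_zero] at hinv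
  exact (sub_eq_zero.mp hinv.symm).symm

instance : SMul K (unipotentFixed K V) where
  smul l a := ⟨uu K l • (weyl K)⁻¹ • (a : V) - (weyl K)⁻¹ • (a : V), uu_smul_sub_mem _ _⟩

lemma coe_smul (l : K) (a : unipotentFixed K V) :
    ((l • a : unipotentFixed K V) : V) = uu K l • (weyl K)⁻¹ • (a : V) - (weyl K)⁻¹ • (a : V) :=
  rfl

lemma coe_units_smul (l : Kˣ) (a : unipotentFixed K V) :
    (((l : K) • a : unipotentFixed K V) : V) = tt K l • (a : V) :=
  uu_smul_weyl_inv_smul_sub l a.2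

lemma zero_smul_unipotentFixed (a : unipotentFixed K V) : (0 : K) • a = 0 :=
  Subtype.ext (by rw [coe_smul, uu_zero, one_smul, sub_self, AddSubgroup.coe_zero])

lemma smul_zero_unipotentFixed (l : K) : l • (0 : unipotentFixed K V) = 0 :=
  Subtype.ext (by simp only [coe_smul, AddSubgroup.coe_zero, smul_zero, sub_self])

lemma mul_smul_unipotentFixed (l m : K) (a : unipotentFixed K V) :
    (l * m) • a = l • m • a := by
  rcases eq_or_ne l 0 with rfl | hl
  · rw [zero_mul, zero_smul_unipotentFixed, zero_smul_unipotentFixed]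
  rcases eq_or_ne m 0 with rfl | hm
  · rw [mul_zero, zero_smul_unipotentFixed, smul_zero_unipotentFixed]
  lift l to Kˣ using hl.isUnit
  lift m to Kˣ using hm.isUnit
  ext
  rw [← Units.val_mul, coe_units_smul, coe_units_smul, coe_units_smul, tt_mul, mul_smul]

lemma add_smul_unipotentFixed (l m : K) (a : unipotentFixed K V) :
    (l + m) • a = l • a + m • a := by
  have hfixed : uu K l • (m • a : unipotentFixed K V) = ((m • a : unipotentFixed K V) : V) :=
    (m • a).2 l
  rw [coe_smul, smul_sub, sub_eq_iff_eq_add] at hfixed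
  ext
  rw [AddSubgroup.coe_add, coe_smul, coe_smul, coe_smul, uu_add, mul_smul, hfixed]
  abel

instance : Module K (unipotentFixed K V) where
  one_smul a := Subtype.ext (by simpa [tt_one] using coe_units_smul 1 a)
  mul_smul := mul_smul_unipotentFixed
  smul_zero := smul_zero_unipotentFixed
  smul_add l a b := Subtype.ext (by simp only [coe_smul, AddSubgroup.coe_add, smul_add]; abel)
  add_smul := add_smul_unipotentFixed
  zero_smul := zero_smul_unipotentFixed

lemma weyl_smul (a : unipotentFixed K V) : weyl K • (a : V) = -((weyl K)⁻¹ • (a : V)) := by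
  have hneg : tt K (-1) • (a : V) = -a := by
    rw [← coe_units_smul, Units.val_neg, Units.val_one, neg_one_smul, AddSubgroup.coe_neg]
  conv_lhs => rw [weyl_eq_inv_mul_tt, mul_smul, hneg, smul_neg]

/-- The additive map `K² → V` attached to `a ∈ C_V(U)`, sending `(x, y)` to `x • a + w⁻¹(y • a)`.
It is the one candidate for an equivariant map with `(1, 0) ↦ a`, as `w⁻¹(1, 0) = (0, 1)`. -/
def naturalAddHom (a : unipotentFixed K V) : (Fin 2 → K) →+ V where
  toFun p := (p 0 • a : unipotentFixed K V) + (weyl K)⁻¹ • ((p 1 • a : unipotentFixed K V) : V)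
  map_zero' := by simp
  map_add' p q := by
    simp only [Pi.add_apply, add_smul, AddSubgroup.coe_add, smul_add]
    abel

lemma naturalAddHom_apply (a : unipotentFixed K V) (p : Fin 2 → K) :
    naturalAddHom a p =
      (p 0 • a : unipotentFixed K V) + (weyl K)⁻¹ • ((p 1 • a : unipotentFixed K V) : V) :=
  rfl

lemma naturalAddHom_uu_smul (a : unipotentFixed K V) (l : K) (p : Fin 2 → K) :
    naturalAddHom a (uu K l • p) = uu K l • naturalAddHom a p := by
  rw [uu_smul_vec, naturalAddHom_apply, naturalAddHom_apply, Matrix.cons_val_zero,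
    Matrix.cons_val_one, Matrix.cons_val_zero, smul_add, (p 0 • a).2 l, add_smul, mul_smul,
    AddSubgroup.coe_add, coe_smul l]
  abel

lemma naturalAddHom_weyl_smul (a : unipotentFixed K V) (p : Fin 2 → K) :
    naturalAddHom a (weyl K • p) = weyl K • naturalAddHom a p := by
  rw [weyl_smul_vec, naturalAddHom_apply, naturalAddHom_apply, Matrix.cons_val_zero,
    Matrix.cons_val_one, Matrix.cons_val_zero, smul_add, smul_inv_smul, weyl_smul, neg_smul,
    AddSubgroup.coe_neg, smul_neg, add_comm]

theorem naturalAddHom_smul (a : unipotentFixed K V) (g : SL(2, K)) (p : Fin 2 → K) :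
    naturalAddHom a (g • p) = g • naturalAddHom a p := by
  induction g using uu_weyl_induction generalizing p with
  | uu l => exact naturalAddHom_uu_smul a l p
  | weyl => exact naturalAddHom_weyl_smul a p
  | mul g h hg hh => rw [mul_smul, hg, hh, mul_smul]

theorem naturalAddHom_injective {a : unipotentFixed K V} (ha : a ≠ 0) :
    Function.Injective (naturalAddHom a) := by
  rw [injective_iff_map_eq_zero]
  intro p hp
  rw [naturalAddHom_apply] at hp
  have h1 : p 1 • a = 0 := by
    refine Subtype.ext (eq_zero_of_mem_unipotentFixed (p 1 • a).2 ?_)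
    rw [← neg_eq_of_add_eq_zero_right hp]
    exact neg_mem (p 0 • a).2
  have h0 : p 0 • a = 0 := by
    rw [h1, AddSubgroup.coe_zero, smul_zero, add_zero] at hp
    exact Subtype.ext hp
  ext i
  match i with
  | 0 => exact (smul_eq_zero_iff_left ha).mp h0
  | 1 => exact (smul_eq_zero_iff_left ha).mp h1

end IsFixedPointFreeQuadratic

section Irreducible

variable {G V : Type*} [AddGroup V]

lemma fixedPoints_eq_bot_of_irreducible [Monoid G] [DistribMulAction G V]
    (hirr : ∀ W : AddSubgroup V, (∀ g : G, ∀ v ∈ W, g • v ∈ W) → W = ⊥ ∨ W = ⊤)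
    (hG : ∃ (g : G) (v : V), g • v ≠ v) : FixedPoints.addSubgroup G V = ⊥ := by
  refine (hirr _ fun g v hv ↦ by rwa [hv g]).resolve_right fun htop ↦ ?_
  obtain ⟨g, v, hgv⟩ := hG
  exact hgv ((htop ▸ AddSubgroup.mem_top v : v ∈ FixedPoints.addSubgroup G V) g)

lemma surjective_of_irreducible {X : Type*} [AddGroup X] [SMul G V] [SMul G X]
    (hirr : ∀ W : AddSubgroup V, (∀ g : G, ∀ v ∈ W, g • v ∈ W) → W = ⊥ ∨ W = ⊤)
    {f : X →+ V} (hf : ∀ (g : G) (x : X), f (g • x) = g • f x) (hf0 : f ≠ 0) :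
    Function.Surjective f := by
  rw [← AddMonoidHom.range_eq_top]
  refine (hirr f.range ?_).resolve_left (mt AddMonoidHom.range_eq_bot_iff.mp hf0)
  rintro g _ ⟨x, rfl⟩
  exact ⟨g • x, hf g x⟩

end Irreducible

lemma exists_linearEquiv_of_addEquiv {R G V W : Type*} [Semiring R] [AddCommMonoid V]
    [AddCommMonoid W] [Module R W] [SMul G V] [SMul G W] [SMulCommClass G R W] (e : V ≃+ W)
    (he : ∀ (g : G) (v : V), e (g • v) = g • e v) :
    ∃ (_ : Module R V) (_ : SMulCommClass G R V) (f : V ≃ₗ[R] W),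
      ∀ (g : G) (v : V), f (g • v) = g • f v := by
  let := e.module R
  let f : V ≃ₗ[R] W := e.linearEquiv R
  refine ⟨inferInstance, ⟨fun g c v ↦ f.injective ?_⟩, f, he⟩
  calc f (g • c • v) = g • f (c • v) := he g _
    _ = c • g • f v := by rw [map_smul, smul_comm]
    _ = f (c • g • v) := by rw [map_smul]; exact congrArg _ (he g v).symm

theorem stmt11_general {K : Type*} [Field K] {V : Type*} [AddCommGroup V]
    [DistribMulAction SL(2, K) V]
    (hirr : ∀ W : AddSubgroup V, (∀ g : SL(2, K), ∀ v ∈ W, g • v ∈ W) → W = ⊥ ∨ W = ⊤)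
    (hU : ∃ (l : K) (v : V), uu K l • v ≠ v)
    (hquad : ∀ (l : K) (v : V) (m : K), uu K m • (uu K l • v - v) = uu K l • v - v) :
    ∃ (_ : Module K V) (_ : SMulCommClass SL(2, K) K V) (e : V ≃ₗ[K] (Fin 2 → K)),
      ∀ (g : SL(2, K)) (v : V), e (g • v) = g • e v := by
  obtain ⟨l, v, hv⟩ := hU
  have : IsFixedPointFreeQuadratic K V := ⟨hquad, fixedPoints_eq_bot_of_irreducible hirr ⟨_, v, hv⟩⟩
  let a : unipotentFixed K V := ⟨uu K l • v - v, hquad l v⟩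
  have ha : a ≠ 0 := fun h ↦ hv (sub_eq_zero.mp (congrArg Subtype.val h))
  let φ := IsFixedPointFreeQuadratic.naturalAddHom a
  have hφ : ∀ (g : SL(2, K)) p, φ (g • p) = g • φ p :=
    IsFixedPointFreeQuadratic.naturalAddHom_smul a
  have hinj : Function.Injective φ := IsFixedPointFreeQuadratic.naturalAddHom_injective ha
  have hφ0 : φ ≠ 0 := fun h ↦ one_ne_zero (hinj ((DFunLike.congr_fun h 1).trans φ.map_zero.symm))
  let e := AddEquiv.ofBijective φ ⟨hinj, surjective_of_irreducible hirr hφ hφ0⟩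
  refine exists_linearEquiv_of_addEquiv e.symm fun g v ↦ ?_
  rw [AddEquiv.symm_apply_eq]
  exact (e.apply_symm_apply v ▸ hφ g (e.symm v)).symm

/-- Let `K` be an algebraically closed field, `G = SL₂(K)` and `V`
a nonzero `G`-irreducible `G`-module on which `U` acts nontrivially, with
`[U, V] ⊆ C_V(U)` and `C_V(T) = 0`.  Then `V` carries a `K`-vector space structure
(on the given additive group) making the `G`-action `K`-linear, together with a
`K`-linear `G`-equivariant isomorphism onto the natural module `K²`.

This is expressed by the existence of a scalar multiplication `smul : K → V → V`
and an additive isomorphism `e : V ≃+ (Fin 2 → K)` such that `e` intertwines `smul`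
with the scalar multiplication of `K²` (so `smul` is a `K`-vector space structure on
`V` and `e` is `K`-linear), the `G`-action commutes with `smul` (it is `K`-linear),
and `e` intertwines the `G`-action with matrix multiplication on `K²`. -/
theorem stmt11 {K : Type*} [Field K] [IsAlgClosed K] {V : Type*} [AddCommGroup V]
    [DistribMulAction (Matrix.SpecialLinearGroup (Fin 2) K) V]
    (hV : ∃ v : V, v ≠ 0)
    (hirr : ∀ W : AddSubgroup V,
      (∀ (g : Matrix.SpecialLinearGroup (Fin 2) K), ∀ v ∈ W, g • v ∈ W) →
      W = ⊥ ∨ W = ⊤)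
    (hU : ∃ (l : K) (v : V), uu K l • v ≠ v)
    (hquad : ∀ (l : K) (v : V) (m : K),
      uu K m • (uu K l • v - v) = uu K l • v - v)
    (hT : ∀ v : V, (∀ l : Kˣ, tt K l • v = v) → v = 0) :
    ∃ (smul : K → V → V) (e : V ≃+ (Fin 2 → K)),
      (∀ (c : K) (v : V), e (smul c v) = c • e v) ∧
      (∀ (g : Matrix.SpecialLinearGroup (Fin 2) K) (c : K) (v : V),
        g • smul c v = smul c (g • v)) ∧
      (∀ (g : Matrix.SpecialLinearGroup (Fin 2) K) (v : V),
        e (g • v) = (g : Matrix (Fin 2) (Fin 2) K).mulVec (e v)) := by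
  obtain ⟨_, _, e, he⟩ := stmt11_general hirr hU hquad
  exact ⟨(· • ·), e.toAddEquiv, e.map_smul, smul_comm, he⟩
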